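/- Let γ, δ₀ and the test measures be as in the planar curve setup, and write x₀ = γ(0), R = R(0), Ṙ = R'(0). For δ ∈ (0, δ₀] and σ, ε > 0 with max(σ, ε) ≤ δ/4, define the map T on φ((−ε, ε) × (−σ, σ)) by T(φ(α, β)) := φ( δ − α, β − (1/2)·(Ṙ/R²)·(σ² − β²)·(δ − 2α) ). Then there exist constants C > 0 and δ₁ ∈ (0, δ₀] such that for all δ ∈ (0, δ₁] and all σ, ε > 0 with max(σ, ε) ≤ δ/4 (for which T is well defined and maps the support of μ_{x₀}^{σ,ε} into the Fermi chart domain), writing y = γ(δ): | W₁(μ_{x₀}^{σ,ε}, μ_y^{σ,ε}) − W₁(μ_{x₀}^{σ,ε}, T_* μ_{x₀}^{σ,ε}) | ≤ C·δ⁴. -/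

import Mathlib

open MeasureTheory Set

/-- The 1-Wasserstein distance: infimum over couplings of the integral of the distance. -/
noncomputable def W1 {X : Type*} [MeasurableSpace X] [PseudoMetricSpace X]
    (μ ν : Measure X) : ℝ :=
  sInf { c : ℝ | ∃ π : Measure (X × X), IsProbabilityMeasure π ∧
      π.map Prod.fst = μ ∧ π.map Prod.snd = ν ∧ c = ∫ p, dist p.1 p.2 ∂π }

/-- Restriction of the ambient volume measure to a set, normalized to a probability measure. -/
noncomputable def normRestrict {X : Type*} [MeasureSpace X] (s : Set X) : Measure X :=
  (volume s)⁻¹ • volume.restrict s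

/-!
Up to an error `O(δ³)`, the displacement from a point with Fermi coordinates `(α, β)` to one with
coordinates `(δ - α, β + O(δ³))` is a multiple, of length comparable to `δ`, of the single unit
vector `e = γ'(δ/2)`: the curve and its normal field are expanded symmetrically about the midpoint.
By Pythagoras its norm then exceeds its `e`-component by `O(δ⁶/δ)` only, so the linear function
`⟪e, ·⟫` is an almost optimal Kantorovich potential and the `W₁` distance between the two laws is
the mean `e`-displacement up to `O(δ⁴)`. A change of the normal coordinate by `O(δ³)` moves the
image point along `n(δ - α)`, which is orthogonal to `e` up to `O(δ)`, and so changes the mean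
`e`-displacement by `O(δ⁴)` only.

Shearing the normal coordinate by the antiderivative of the Jacobian `1 - κβ` turns the Fermi chart
into an area-preserving map; in these coordinates both test measures are images of the uniform
measure on a rectangle, coupled by the reflection `α ↦ δ - α`. The shears over `α` and `δ - α`
differ by `O(δ³)`, so this coupling is of the above form, and so is the one given by `T`.
-/

open scoped RealInnerProductSpace

section Wasserstein

variable {X : Type*} [PseudoMetricSpace X] [MeasurableSpace X] [OpensMeasurableSpace X]
  [SecondCountableTopology X]

lemma W1_map_le_integral_dist {Ω : Type*} [MeasurableSpace Ω] {P : Measure Ω}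
    [IsProbabilityMeasure P] {f g : Ω → X} (hf : AEMeasurable f P) (hg : AEMeasurable g P) :
    W1 (P.map f) (P.map g) ≤ ∫ ω, dist (f ω) (g ω) ∂P := by
  have hfg : AEMeasurable (fun ω => (f ω, g ω)) P := hf.prodMk hg
  refine csInf_le ⟨0, ?_⟩
    ⟨P.map fun ω => (f ω, g ω), Measure.isProbabilityMeasure_map hfg, ?_, ?_, ?_⟩
  · rintro _ ⟨π, -, -, -, rfl⟩
    exact integral_nonneg fun _ => dist_nonneg
  · exact AEMeasurable.map_map_of_aemeasurable measurable_fst.aemeasurable hfg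
  · exact AEMeasurable.map_map_of_aemeasurable measurable_snd.aemeasurable hfg
  · exact (integral_map hfg measurable_dist.aestronglyMeasurable).symm

end Wasserstein

section Kantorovich

variable {E : Type*} [NormedAddCommGroup E] [MeasurableSpace E] [BorelSpace E]
  [SecondCountableTopology E]

lemma integrable_of_lipschitzWith {F : Type*} [NormedAddCommGroup F] {μ : Measure E}
    [IsFiniteMeasure μ] (hμ : Integrable id μ) {K : NNReal} {f : E → F} (hf : LipschitzWith K f) :
    Integrable f μ := by
  refine ((hμ.norm.const_mul (K : ℝ)).add (integrable_const ‖f 0‖)).mono'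
    hf.continuous.aestronglyMeasurable (ae_of_all _ fun x => ?_)
  have hx : ‖f x - f 0‖ ≤ K * ‖x‖ := by simpa using hf.norm_sub_le x 0
  have htriangle := norm_sub_norm_le (f x) (f 0)
  simp only [Pi.add_apply, id_eq]
  linarith

lemma integral_sub_integral_le_W1 {μ ν : Measure E} [IsProbabilityMeasure μ]
    [IsProbabilityMeasure ν] (hμ : Integrable id μ) (hν : Integrable id ν) {f : E → ℝ}
    (hf : LipschitzWith 1 f) : ∫ x, f x ∂ν - ∫ x, f x ∂μ ≤ W1 μ ν := by
  refine le_csInf ⟨_, μ.prod ν, inferInstance, by simp, by simp, rfl⟩ ?_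
  rintro _ ⟨π, -, rfl, rfl, rfl⟩
  have hfst : Integrable (fun p : E × E => p.1) π := hμ.comp_measurable measurable_fst
  have hsnd : Integrable (fun p : E × E => p.2) π := hν.comp_measurable measurable_snd
  have hdist : Integrable (fun p : E × E => dist p.1 p.2) π := by
    simp only [dist_eq_norm]
    exact (hfst.sub hsnd).norm
  have hf₁ : Integrable (fun p : E × E => f p.1) π :=
    (integrable_of_lipschitzWith hμ hf).comp_measurable measurable_fst
  have hf₂ : Integrable (fun p : E × E => f p.2) π :=
    (integrable_of_lipschitzWith hν hf).comp_measurable measurable_snd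
  rw [integral_map measurable_fst.aemeasurable hf.continuous.aestronglyMeasurable,
    integral_map measurable_snd.aemeasurable hf.continuous.aestronglyMeasurable,
    ← integral_sub hf₂ hf₁]
  refine integral_mono (hf₂.sub hf₁) hdist fun p => ?_
  calc f p.2 - f p.1 ≤ dist (f p.2) (f p.1) := le_abs_self _
    _ ≤ dist p.1 p.2 := by simpa [dist_comm p.1] using hf.dist_le_mul p.2 p.1

end Kantorovich

section AlignedDisplacements

variable {E : Type*} [NormedAddCommGroup E] [InnerProductSpace ℝ E]

lemma norm_le_inner_add_of_norm_sub_smul_le {v e : E} (he : ‖e‖ = 1) {s r : ℝ} (hs : 0 < s)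
    (h : ‖v - s • e‖ ≤ r) : ‖v‖ ≤ ⟪e, v⟫ + r ^ 2 / (2 * s) := by
  have hexpand : ‖v - s • e‖ ^ 2 = ‖v‖ ^ 2 - 2 * s * ⟪e, v⟫ + s ^ 2 := by
    rw [norm_sub_sq_real, real_inner_smul_right, norm_smul, he, real_inner_comm, Real.norm_eq_abs,
      mul_one, sq_abs]
    ring
  have hsq : ‖v - s • e‖ ^ 2 ≤ r ^ 2 := by gcongr
  rw [← sub_le_iff_le_add', le_div_iff₀ (by positivity)]
  linarith [sq_nonneg (‖v‖ - s)]

variable [MeasurableSpace E] [BorelSpace E] [SecondCountableTopology E]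
  {Ω : Type*} [MeasurableSpace Ω] {P : Measure Ω} [IsProbabilityMeasure P] {X Y Z : Ω → E}

lemma integral_inner_sub_le_W1_map (hX : Integrable X P) (hY : Integrable Y P) {e : E}
    (he : ‖e‖ ≤ 1) : ∫ ω, ⟪e, Y ω - X ω⟫ ∂P ≤ W1 (P.map X) (P.map Y) := by
  have := Measure.isProbabilityMeasure_map hX.aemeasurable
  have := Measure.isProbabilityMeasure_map hY.aemeasurable
  have hinner : Continuous fun x : E => ⟪e, x⟫ := by fun_prop
  have hlip : LipschitzWith 1 fun x : E => ⟪e, x⟫ := LipschitzWith.of_le_add fun x y => by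
    calc ⟪e, x⟫ = ⟪e, y⟫ + ⟪e, x - y⟫ := by rw [inner_sub_right]; ring
      _ ≤ ⟪e, y⟫ + ‖e‖ * ‖x - y‖ := by gcongr; exact real_inner_le_norm _ _
      _ ≤ ⟪e, y⟫ + dist x y := by
        rw [dist_eq_norm]; gcongr; exact mul_le_of_le_one_left (norm_nonneg _) he
  calc ∫ ω, ⟪e, Y ω - X ω⟫ ∂P = ∫ y, ⟪e, y⟫ ∂P.map Y - ∫ x, ⟪e, x⟫ ∂P.map X := by
        rw [integral_map hY.aemeasurable hinner.aestronglyMeasurable,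
          integral_map hX.aemeasurable hinner.aestronglyMeasurable,
          ← integral_sub (hY.const_inner e) (hX.const_inner e)]
        simp only [inner_sub_right]
    _ ≤ W1 (P.map X) (P.map Y) := integral_sub_integral_le_W1
      ((integrable_map_measure aestronglyMeasurable_id hX.aemeasurable).2 hX)
      ((integrable_map_measure aestronglyMeasurable_id hY.aemeasurable).2 hY) hlip

lemma W1_map_le_W1_map_add (hX : Integrable X P) (hY : Integrable Y P) (hZ : Integrable Z P)
    {e : E} (he : ‖e‖ ≤ 1) {η ζ : ℝ} (hXY : ∀ᵐ ω ∂P, ‖Y ω - X ω‖ ≤ ⟪e, Y ω - X ω⟫ + η)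
    (hYZ : ∀ᵐ ω ∂P, ⟪e, Y ω - Z ω⟫ ≤ ζ) :
    W1 (P.map X) (P.map Y) ≤ W1 (P.map X) (P.map Z) + (η + ζ) := by
  have hXZ : Integrable (fun ω => ⟪e, Z ω - X ω⟫) P := (hZ.sub hX).const_inner e
  calc W1 (P.map X) (P.map Y) ≤ ∫ ω, dist (X ω) (Y ω) ∂P :=
        W1_map_le_integral_dist hX.aemeasurable hY.aemeasurable
    _ ≤ ∫ ω, (⟪e, Z ω - X ω⟫ + (η + ζ)) ∂P := by
        refine integral_mono_ae ?_ (hXZ.add (integrable_const _)) ?_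
        · simp only [dist_eq_norm]
          exact (hX.sub hY).norm
        · filter_upwards [hXY, hYZ] with ω hω hω'
          rw [dist_comm, dist_eq_norm]
          simp only [inner_sub_right] at hω hω' ⊢
          linarith
    _ = ∫ ω, ⟪e, Z ω - X ω⟫ ∂P + (η + ζ) := by
        rw [integral_add hXZ (integrable_const _)]; simp
    _ ≤ W1 (P.map X) (P.map Z) + (η + ζ) := by
        gcongr; exact integral_inner_sub_le_W1_map hX hZ he

lemma abs_W1_map_sub_W1_map_le (hX : Integrable X P) (hY : Integrable Y P) (hZ : Integrable Z P)
    {e : E} (he : ‖e‖ ≤ 1) {η ζ : ℝ} (hXY : ∀ᵐ ω ∂P, ‖Y ω - X ω‖ ≤ ⟪e, Y ω - X ω⟫ + η)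
    (hXZ : ∀ᵐ ω ∂P, ‖Z ω - X ω‖ ≤ ⟪e, Z ω - X ω⟫ + η)
    (hYZ : ∀ᵐ ω ∂P, |⟪e, Y ω - Z ω⟫| ≤ ζ) :
    |W1 (P.map X) (P.map Y) - W1 (P.map X) (P.map Z)| ≤ η + ζ := by
  rw [abs_sub_le_iff, sub_le_iff_le_add', sub_le_iff_le_add']
  refine ⟨W1_map_le_W1_map_add hX hY hZ he hXY (hYZ.mono fun ω hω => (le_abs_self _).trans hω),
    W1_map_le_W1_map_add hX hZ hY he hXZ (hYZ.mono fun ω hω => ?_)⟩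
  rw [← neg_sub, inner_neg_right]
  exact (neg_le_abs _).trans hω

end AlignedDisplacements

section CentralDifference

variable {F : Type*} [NormedAddCommGroup F] [NormedSpace ℝ F]

lemma norm_le_mul_of_norm_deriv_le {f f' : ℝ → F} {h C : ℝ} (hf : ∀ x, HasDerivAt f (f' x) x)
    (hf₀ : f 0 = 0) (hC : ∀ x ∈ Icc 0 h, ‖f' x‖ ≤ C) {x : ℝ} (hx : x ∈ Icc 0 h) :
    ‖f x‖ ≤ C * h := by
  have hC₀ : 0 ≤ C := (norm_nonneg _).trans (hC x hx)
  calc ‖f x‖ = ‖f x - f 0‖ := by rw [hf₀, sub_zero]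
    _ ≤ C * (x - 0) := norm_image_sub_le_of_norm_deriv_le_segment'
      (fun y _ => (hf y).hasDerivWithinAt) (fun y hy => hC y (Ico_subset_Icc_self hy)) x hx
    _ ≤ C * h := by rw [sub_zero]; gcongr; exact hx.2

/- The first two derivatives in `h` of the left-hand side vanish at `h = 0`, and its third
derivative is controlled by the variation of `f''`. -/
lemma norm_central_difference_le {f f' f'' : ℝ → F} (hf : ∀ x, HasDerivAt f (f' x) x)
    (hf' : ∀ x, HasDerivAt f' (f'' x) x) {m h : ℝ} {K : NNReal} (hh : 0 ≤ h)
    (hK : LipschitzOnWith K f'' (Icc (m - h) (m + h))) :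
    ‖f (m + h) - f (m - h) - (2 * h) • f' m‖ ≤ 2 * K * h ^ 3 := by
  have hsecond : ∀ x ∈ Icc 0 h, ‖f'' (m + x) - f'' (m - x)‖ ≤ 2 * K * h := by
    rintro x ⟨hx₀, hxh⟩
    calc ‖f'' (m + x) - f'' (m - x)‖ ≤ K * ‖m + x - (m - x)‖ :=
          hK.norm_sub_le ⟨by linarith, by linarith⟩ ⟨by linarith, by linarith⟩
      _ = K * (2 * x) := by rw [Real.norm_of_nonneg] <;> ring_nf; positivity
      _ ≤ K * (2 * h) := by gcongr
      _ = 2 * K * h := by ring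
  have hfirst : ∀ x ∈ Icc 0 h, ‖f' (m + x) + f' (m - x) - (2 : ℝ) • f' m‖ ≤ 2 * K * h * h :=
    fun x hx => norm_le_mul_of_norm_deriv_le
      (f := fun x => f' (m + x) + f' (m - x) - (2 : ℝ) • f' m)
      (fun x => by
        simpa [sub_eq_add_neg] using
          (((hf' (m + x)).comp_const_add m x).add ((hf' (m - x)).comp_const_sub m x)).sub_const
            ((2 : ℝ) • f' m))
      (by simp [two_smul]) hsecond hx
  calc ‖f (m + h) - f (m - h) - (2 * h) • f' m‖ ≤ 2 * K * h * h * h :=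
        norm_le_mul_of_norm_deriv_le (f := fun x => f (m + x) - f (m - x) - (2 * x) • f' m)
          (fun x => by
            simpa using
              (((hf (m + x)).comp_const_add m x).fun_sub ((hf (m - x)).comp_const_sub m x)).fun_sub
                (((hasDerivAt_id x).const_mul 2).smul_const (f' m)))
          (by simp) hfirst ⟨hh, le_rfl⟩
    _ = 2 * K * h ^ 3 := by ring

lemma exists_norm_central_difference_le {f : ℝ → F} (hf : ContDiff ℝ 3 f) (a b : ℝ) :
    ∃ C : ℝ, 0 ≤ C ∧ ∀ m h, 0 ≤ h → a ≤ m - h → m + h ≤ b →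
      ‖f (m + h) - f (m - h) - (2 * h) • deriv f m‖ ≤ C * h ^ 3 := by
  have hf' : ContDiff ℝ 2 (deriv f) := hf.deriv'
  have hf'' : ContDiff ℝ 1 (deriv (deriv f)) := hf'.deriv'
  obtain ⟨K, hK⟩ := hf''.contDiffOn.exists_lipschitzOnWith one_ne_zero (convex_Icc a b)
    isCompact_Icc
  refine ⟨2 * K, by positivity, fun m h hh ha hb => ?_⟩
  exact norm_central_difference_le (fun x => (hf.differentiable (by norm_num) x).hasDerivAt)
    (fun x => (hf'.differentiable (by norm_num) x).hasDerivAt) hh (hK.mono (Icc_subset_Icc ha hb))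

end CentralDifference

section FibreShear

/-- The area-preserving reparametrization of a Fermi fibre `(-σ, σ)` over a point of curvature `k`:
the antiderivative of the Jacobian `1 - k * β` that fixes both end points `±σ`. -/
noncomputable def shear (σ k β : ℝ) : ℝ := β + k * (σ ^ 2 - β ^ 2) / 2

/-- The inverse of `shear σ k` on `(-σ, σ)`. The root `(1 - √D) / k` of the quadratic equation
`shear σ k β = u` is rationalized so that the formula is also correct for `k = 0`. -/
noncomputable def unshear (σ k u : ℝ) : ℝ :=
  (2 * u - k * σ ^ 2) / (1 + √(1 - 2 * k * u + k ^ 2 * σ ^ 2))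

variable {σ k k' u β β' : ℝ}

lemma abs_mul_lt_of_mem_Ioo (hβ : β ∈ Ioo (-σ) σ) (hk : |k| * σ < 1) : |k * β| < 1 := by
  rw [abs_mul]
  exact (mul_le_mul_of_nonneg_left (abs_lt.2 hβ).le (abs_nonneg k)).trans_lt hk

lemma unshear_shear (hβ : β ∈ Ioo (-σ) σ) (hk : |k| * σ < 1) : unshear σ k (shear σ k β) = β := by
  have hJ : 0 < 1 - k * β := sub_pos.2 (abs_lt.1 (abs_mul_lt_of_mem_Ioo hβ hk)).2
  have hdisc : 1 - 2 * k * shear σ k β + k ^ 2 * σ ^ 2 = (1 - k * β) ^ 2 := by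
    rw [shear]; ring
  rw [unshear, hdisc, Real.sqrt_sq hJ.le, div_eq_iff (by linarith), shear]
  ring

lemma discriminant_pos (hu : u ∈ Ioo (-σ) σ) (hk : |k| * σ < 1) :
    0 < 1 - 2 * k * u + k ^ 2 * σ ^ 2 := by
  have hku : k * u ≤ |k| * σ := by
    calc k * u ≤ |k| * |u| := (le_abs_self _).trans_eq (abs_mul k u)
      _ ≤ |k| * σ := by gcongr; exact (abs_lt.2 hu).le
  calc 0 < (1 - |k| * σ) ^ 2 := by have := sub_pos.2 hk; positivity
    _ = 1 - 2 * (|k| * σ) + k ^ 2 * σ ^ 2 := by rw [sub_sq, mul_pow, sq_abs]; ring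
    _ ≤ 1 - 2 * k * u + k ^ 2 * σ ^ 2 := by linarith

lemma mul_unshear (hu : u ∈ Ioo (-σ) σ) (hk : |k| * σ < 1) :
    k * unshear σ k u = 1 - √(1 - 2 * k * u + k ^ 2 * σ ^ 2) := by
  rw [unshear, ← mul_div_assoc, div_eq_iff (by positivity)]
  linear_combination Real.sq_sqrt (discriminant_pos hu hk).le

lemma shear_unshear (hu : u ∈ Ioo (-σ) σ) (hk : |k| * σ < 1) : shear σ k (unshear σ k u) = u := by
  have hdef : unshear σ k u * (1 + √(1 - 2 * k * u + k ^ 2 * σ ^ 2)) = 2 * u - k * σ ^ 2 :=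
    div_mul_cancel₀ _ (by positivity)
  rw [shear]
  linear_combination hdef / 2 - unshear σ k u / 2 * mul_unshear hu hk

lemma sub_shear : σ - shear σ k β = (σ - β) * (1 - k * (σ + β) / 2) := by
  rw [shear]; ring

lemma shear_add : shear σ k β + σ = (β + σ) * (1 + k * (σ - β) / 2) := by
  rw [shear]; ring

lemma shear_mem_Ioo (hβ : β ∈ Ioo (-σ) σ) (hk : |k| * σ < 1) : shear σ k β ∈ Ioo (-σ) σ := by
  have hσ : 0 < σ := neg_lt_self_iff.1 (hβ.1.trans hβ.2)
  have hkβ := abs_lt.1 (abs_mul_lt_of_mem_Ioo hβ hk)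
  have hkσ : |k * σ| < 1 := by rwa [abs_mul, abs_of_pos hσ]
  have hkσ' := abs_lt.1 hkσ
  constructor
  · have hfactor : 0 < 1 + k * (σ - β) / 2 := by linarith
    linarith [shear_add (σ := σ) (k := k) (β := β), mul_pos (neg_lt_iff_pos_add.1 hβ.1) hfactor]
  · have hfactor : 0 < 1 - k * (σ + β) / 2 := by linarith
    linarith [sub_shear (σ := σ) (k := k) (β := β), mul_pos (sub_pos.2 hβ.2) hfactor]

lemma unshear_mem_Ioo (hu : u ∈ Ioo (-σ) σ) (hk : |k| * σ < 1) :
    unshear σ k u ∈ Ioo (-σ) σ := by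
  have hσ : 0 < σ := neg_lt_self_iff.1 (hu.1.trans hu.2)
  have hkσ : |k * σ| < 1 := by rwa [abs_mul, abs_of_pos hσ]
  have hkσ' := abs_lt.1 hkσ
  have hroot := Real.sqrt_nonneg (1 - 2 * k * u + k ^ 2 * σ ^ 2)
  have hmul := mul_unshear hu hk
  constructor
  · have hfactor : 0 < 1 + k * (σ - unshear σ k u) / 2 := by linarith
    refine neg_lt_iff_pos_add.2 (pos_of_mul_pos_left ?_ hfactor.le)
    rw [← shear_add, shear_unshear hu hk]
    exact neg_lt_iff_pos_add.1 hu.1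
  · have hfactor : 0 < 1 - k * (σ + unshear σ k u) / 2 := by linarith
    refine sub_pos.1 (pos_of_mul_pos_left ?_ hfactor.le)
    rw [← sub_shear, shear_unshear hu hk]
    exact sub_pos.2 hu.2

lemma abs_sub_le_of_shear_eq_shear (hβ : β ∈ Ioo (-σ) σ) (hβ' : β' ∈ Ioo (-σ) σ)
    (hk' : |k'| * σ ≤ 1 / 2) (h : shear σ k β = shear σ k' β') : |β' - β| ≤ |k' - k| * σ ^ 2 := by
  have hsq : |σ ^ 2 - β ^ 2| ≤ σ ^ 2 := by
    have : β ^ 2 < σ ^ 2 := sq_lt_sq' hβ.1 hβ.2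
    rw [abs_of_nonneg] <;> linarith [sq_nonneg β]
  have hfactor : 1 / 2 ≤ 1 - k' * (β + β') / 2 := by
    have hsum : |β + β'| ≤ 2 * σ := by
      linarith [abs_add_le β β', abs_lt.2 hβ, abs_lt.2 hβ']
    have : k' * (β + β') ≤ |k'| * (2 * σ) := by
      calc k' * (β + β') ≤ |k'| * |β + β'| := (le_abs_self _).trans_eq (abs_mul _ _)
        _ ≤ |k'| * (2 * σ) := by gcongr
    linarith
  have hid : (β' - β) * (1 - k' * (β + β') / 2) = -((k' - k) * (σ ^ 2 - β ^ 2)) / 2 := by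
    simp only [shear] at h
    linear_combination -h
  have habs : |β' - β| * (1 - k' * (β + β') / 2) = |k' - k| * |σ ^ 2 - β ^ 2| / 2 := by
    rw [← abs_of_nonneg (by linarith : 0 ≤ 1 - k' * (β + β') / 2), ← abs_mul, hid, abs_div, abs_neg,
      abs_mul, abs_two]
  have hbound : |k' - k| * |σ ^ 2 - β ^ 2| ≤ |k' - k| * σ ^ 2 := by gcongr
  linarith [mul_le_mul_of_nonneg_left hfactor (abs_nonneg (β' - β))]

lemma abs_unshear_sub_unshear_le (hu : u ∈ Ioo (-σ) σ) (hk : |k| * σ ≤ 1 / 2)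
    (hk' : |k'| * σ ≤ 1 / 2) : |unshear σ k' u - unshear σ k u| ≤ |k' - k| * σ ^ 2 :=
  have hk_lt : |k| * σ < 1 := by linarith
  have hk'_lt : |k'| * σ < 1 := by linarith
  abs_sub_le_of_shear_eq_shear (unshear_mem_Ioo hu hk_lt) (unshear_mem_Ioo hu hk'_lt) hk'
    ((shear_unshear hu hk_lt).trans (shear_unshear hu hk'_lt).symm)

end FibreShear

section AreaFormula

lemma det_real_prod (L : ℝ × ℝ →L[ℝ] ℝ × ℝ) :
    L.det = (L (1, 0)).1 * (L (0, 1)).2 - (L (0, 1)).1 * (L (1, 0)).2 := by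
  rw [ContinuousLinearMap.det, ← LinearMap.det_toMatrix (.finTwoProd ℝ), Matrix.det_fin_two]
  simp [LinearMap.toMatrix_apply]

lemma map_withDensity_abs_det_fderiv_comp {E F : Type*} [NormedAddCommGroup E] [NormedSpace ℝ E]
    [FiniteDimensional ℝ E] [MeasurableSpace E] [BorelSpace E] [NormedAddCommGroup F]
    [NormedSpace ℝ F] [MeasurableSpace F] [BorelSpace F] {μ : Measure E} [μ.IsAddHaarMeasure]
    {ν : Measure F} {e : F ≃L[ℝ] E} (he : MeasurePreserving e ν μ) {f : E → F}
    {f' : E → E →L[ℝ] F} {s : Set E} (hs : MeasurableSet s) (hfm : Measurable f)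
    (hf : ∀ x ∈ s, HasFDerivWithinAt f (f' x) s x) (hinj : InjOn f s) :
    ((μ.restrict s).withDensity fun x => ENNReal.ofReal |((e : F →L[ℝ] E).comp (f' x)).det|).map f =
      ν.restrict (f '' s) := by
  have hpreimage : e ⁻¹' (e ∘ f '' s) = f '' s := by
    rw [image_comp, preimage_image_eq _ e.injective]
  have hcomp := map_withDensity_abs_det_fderiv_eq_addHaar μ hs.nullMeasurableSet
    (fun x hx => e.comp_hasFDerivWithinAt_iff.2 (hf x hx)) (e.injective.comp_injOn hinj)
  have hrestrict := he.restrict_preimage_emb e.toHomeomorph.measurableEmbedding (e ∘ f '' s)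
  rw [hpreimage] at hrestrict
  refine e.toHomeomorph.toMeasurableEquiv.map_measurableEquiv_injective ?_
  exact (Measure.map_map he.measurable hfm).trans (hcomp.trans hrestrict.map_eq.symm)

variable {κ : ℝ → ℝ} {σ : ℝ}

lemma measurable_shear (hκ : Measurable κ) :
    Measurable fun p : ℝ × ℝ => (p.1, shear σ (κ p.1) p.2) := by
  unfold shear
  fun_prop

lemma measurable_unshear (hκ : Measurable κ) :
    Measurable fun p : ℝ × ℝ => unshear σ (κ p.1) p.2 := by
  unfold unshear
  exact Measurable.div (by fun_prop) (measurable_const.add (Measurable.sqrt (by fun_prop)))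

lemma bijOn_shear_prod {s : Set ℝ} (hs : ∀ α ∈ s, |κ α| * σ < 1) :
    BijOn (fun p : ℝ × ℝ => (p.1, shear σ (κ p.1) p.2)) (s ×ˢ Ioo (-σ) σ) (s ×ˢ Ioo (-σ) σ) := by
  refine InvOn.bijOn (f' := fun p : ℝ × ℝ => (p.1, unshear σ (κ p.1) p.2)) ⟨?_, ?_⟩ ?_ ?_
  · exact fun p hp => Prod.ext rfl (unshear_shear hp.2 (hs _ hp.1))
  · exact fun p hp => Prod.ext rfl (shear_unshear hp.2 (hs _ hp.1))
  · exact fun p hp => ⟨hp.1, shear_mem_Ioo hp.2 (hs _ hp.1)⟩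
  · exact fun p hp => ⟨hp.1, unshear_mem_Ioo hp.2 (hs _ hp.1)⟩

lemma exists_hasFDerivAt_shear_prod (hκ : Differentiable ℝ κ) (p : ℝ × ℝ) :
    ∃ L : ℝ × ℝ →L[ℝ] ℝ × ℝ,
      HasFDerivAt (fun p : ℝ × ℝ => (p.1, shear σ (κ p.1) p.2)) L p ∧
        L.det = 1 - κ p.1 * p.2 := by
  have hfst := hasFDerivAt_fst (𝕜 := ℝ) (E := ℝ) (F := ℝ) (p := p)
  have hsnd := hasFDerivAt_snd (𝕜 := ℝ) (E := ℝ) (F := ℝ) (p := p)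
  have hcurv := (hκ p.1).hasDerivAt.comp_hasFDerivAt p hfst
  refine ⟨_, hfst.prodMk (hsnd.add ((hcurv.mul ((hsnd.pow 2).const_sub (σ ^ 2))).mul_const 2⁻¹)),
    ?_⟩
  rw [det_real_prod]
  simp only [Function.comp_apply, Nat.add_one_sub_one, pow_one, nsmul_eq_mul, Nat.cast_ofNat,
    smul_neg, smul_add, ContinuousLinearMap.prod_apply, ContinuousLinearMap.coe_fst', add_apply,
    ContinuousLinearMap.coe_snd', neg_apply, smul_apply, smul_eq_mul, mul_zero, neg_zero, mul_one,
    zero_add, add_zero, one_mul, zero_mul, sub_zero]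
  ring

lemma map_shear_withDensity (hκ : Differentiable ℝ κ) {s : Set ℝ} (hs : MeasurableSet s)
    (hsσ : ∀ α ∈ s, |κ α| * σ < 1) :
    ((volume.restrict (s ×ˢ Ioo (-σ) σ)).withDensity
      fun p : ℝ × ℝ => ENNReal.ofReal |1 - κ p.1 * p.2|).map
        (fun p => (p.1, shear σ (κ p.1) p.2)) = volume.restrict (s ×ˢ Ioo (-σ) σ) := by
  choose L hL hdet using exists_hasFDerivAt_shear_prod (σ := σ) hκ
  have hbij := bijOn_shear_prod hsσ
  have harea := map_withDensity_abs_det_fderiv_eq_addHaar (volume : Measure (ℝ × ℝ))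
    (hs.prod measurableSet_Ioo).nullMeasurableSet (fun p _ => (hL p).hasFDerivWithinAt) hbij.injOn
  simpa only [hdet, hbij.image_eq] using harea

end AreaFormula

/-- The Euclidean plane. -/
abbrev Plane : Type := EuclideanSpace ℝ (Fin 2)

/-- A `C³` curve `γ` in the plane of unit speed, together with a unit normal field `N` along it and
the signed curvature `κ` of `γ` with respect to `N`. In contrast to the normal `R • γ''` used for
the Fermi chart, such a field `N` also exists across points where the curvature vanishes. -/
structure IsMovingFrame (γ N : ℝ → Plane) (κ : ℝ → ℝ) : Prop where
  contDiff_curve : ContDiff ℝ 3 γ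
  contDiff_normal : ContDiff ℝ 3 N
  norm_deriv_curve : ∀ α, ‖deriv γ α‖ = 1
  norm_normal : ∀ α, ‖N α‖ = 1
  inner_normal_deriv : ∀ α, ⟪N α, deriv γ α⟫ = 0
  hasDerivAt_normal : ∀ α, HasDerivAt N (-κ α • deriv γ α) α

namespace IsMovingFrame

variable {γ N : ℝ → Plane} {κ : ℝ → ℝ}

lemma neg (h : IsMovingFrame γ N κ) : IsMovingFrame γ (-N) (-κ) where
  contDiff_curve := h.contDiff_curve
  contDiff_normal := h.contDiff_normal.neg
  norm_deriv_curve := h.norm_deriv_curve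
  norm_normal α := by simpa using h.norm_normal α
  inner_normal_deriv α := by simpa using h.inner_normal_deriv α
  hasDerivAt_normal α := by simpa using (h.hasDerivAt_normal α).neg

lemma hasDerivAt_curve (h : IsMovingFrame γ N κ) (α : ℝ) : HasDerivAt γ (deriv γ α) α :=
  (h.contDiff_curve.differentiable (by norm_num) α).hasDerivAt

lemma contDiff_deriv_curve (h : IsMovingFrame γ N κ) : ContDiff ℝ 2 (deriv γ) :=
  h.contDiff_curve.deriv'

lemma contDiff_curvature (h : IsMovingFrame γ N κ) : ContDiff ℝ 2 κ := by
  have hκ : κ = fun α => -⟪deriv N α, deriv γ α⟫ := by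
    funext α
    rw [(h.hasDerivAt_normal α).deriv, real_inner_smul_left, real_inner_self_eq_norm_sq,
      h.norm_deriv_curve]
    ring
  rw [hκ]
  exact (h.contDiff_normal.deriv'.inner ℝ h.contDiff_deriv_curve).neg

end IsMovingFrame

section FrameExistence

variable {V : Type*} [NormedAddCommGroup V] [InnerProductSpace ℝ V] [Fact (Module.finrank ℝ V = 2)]
  (o : Orientation ℝ V (Fin 2))

lemma eq_areaForm_smul_rightAngleRotation {v w : V} (hv : ‖v‖ = 1) (hvw : ⟪v, w⟫ = 0) :
    w = o.areaForm v w • o.rightAngleRotation v := by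
  refine ext_inner_right ℝ fun x => ?_
  rw [real_inner_smul_left, o.inner_rightAngleRotation_left,
    ← one_mul ⟪w, x⟫, ← one_pow 2, ← hv, ← o.inner_mul_inner_add_areaForm_mul_areaForm v w x, hvw,
    zero_mul, zero_add]

end FrameExistence

lemma inner_deriv_eq_zero_of_norm_eq {V : Type*} [NormedAddCommGroup V] [InnerProductSpace ℝ V]
    {f : ℝ → V} {f' : V} {x c : ℝ} (hf : HasDerivAt f f' x) (hc : ∀ y, ‖f y‖ = c) :
    ⟪f x, f'⟫ = 0 := by
  have hsq := hf.norm_sq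
  simp only [hc] at hsq
  linarith [hsq.unique (hasDerivAt_const x _)]

lemma exists_isMovingFrame {γ : ℝ → Plane} (hγ : ContDiff ℝ 4 γ) (hunit : ∀ α, ‖deriv γ α‖ = 1) :
    ∃ N κ, IsMovingFrame γ N κ ∧ ∀ α, deriv (deriv γ) α = κ α • N α := by
  have : Fact (Module.finrank ℝ Plane = 2) := ⟨finrank_euclideanSpace_fin⟩
  let o : Orientation ℝ Plane (Fin 2) := (EuclideanSpace.basisFun (Fin 2) ℝ).toBasis.orientation
  have hγ' : ContDiff ℝ 3 (deriv γ) := hγ.deriv'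
  have hderiv (α : ℝ) : HasDerivAt (deriv γ) (deriv (deriv γ) α) α :=
    (hγ'.differentiable (by norm_num) α).hasDerivAt
  have hcurv (α : ℝ) : deriv (deriv γ) α =
      o.areaForm (deriv γ α) (deriv (deriv γ) α) • o.rightAngleRotation (deriv γ α) :=
    eq_areaForm_smul_rightAngleRotation o (hunit α)
      (inner_deriv_eq_zero_of_norm_eq (hderiv α) hunit)
  refine ⟨fun α => o.rightAngleRotation (deriv γ α),
    fun α => o.areaForm (deriv γ α) (deriv (deriv γ) α),
    ⟨hγ.of_le (by norm_num), o.rightAngleRotation.contDiff.comp hγ', hunit, ?_, ?_, ?_⟩, hcurv⟩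
  · exact fun α => (o.rightAngleRotation.norm_map _).trans (hunit α)
  · exact fun α => o.inner_rightAngleRotation_self (deriv γ α)
  · intro α
    have hrot := o.rightAngleRotation.toContinuousLinearEquiv.hasFDerivAt.comp_hasDerivAt α
      (hderiv α)
    convert! hrot using 1
    conv_rhs => rw [hcurv α]
    simp

lemma exists_isMovingFrame_of_ne_zero {γ : ℝ → Plane} (hγ : ContDiff ℝ 4 γ)
    (hunit : ∀ α, ‖deriv γ α‖ = 1) {s : Set ℝ} (hs : IsPreconnected s)
    (hcurv : ∀ α ∈ s, deriv (deriv γ) α ≠ 0) :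
    ∃ N κ, IsMovingFrame γ N κ ∧ ∀ α ∈ s, κ α = ‖deriv (deriv γ) α‖ ∧
      N α = ‖deriv (deriv γ) α‖⁻¹ • deriv (deriv γ) α := by
  obtain ⟨N, κ, hframe, hγ''⟩ := exists_isMovingFrame hγ hunit
  have hnorm (α : ℝ) : ‖deriv (deriv γ) α‖ = |κ α| := by
    rw [hγ'', norm_smul, hframe.norm_normal, mul_one, Real.norm_eq_abs]
  have hcont : Continuous (deriv (deriv γ)) :=
    (hγ.deriv' : ContDiff ℝ 3 (deriv γ)).continuous_deriv (by norm_num)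
  have hsign := hs.eq_or_eq_neg_of_sq_eq hframe.contDiff_curvature.continuous.continuousOn
    hcont.norm.continuousOn (fun α _ => by simp [hnorm]) (fun hα => norm_ne_zero_iff.2 (hcurv _ hα))
  have hnormal {N' : ℝ → Plane} {κ' : ℝ → ℝ} (hN' : ∀ α, deriv (deriv γ) α = κ' α • N' α)
      (hκ' : EqOn κ' (fun α => ‖deriv (deriv γ) α‖) s) :
      ∀ α ∈ s, κ' α = ‖deriv (deriv γ) α‖ ∧
        N' α = ‖deriv (deriv γ) α‖⁻¹ • deriv (deriv γ) α := fun α hα => by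
    have hκα : κ' α = ‖deriv (deriv γ) α‖ := hκ' hα
    refine ⟨hκα, (eq_inv_smul_iff₀ (norm_ne_zero_iff.2 (hcurv α hα))).2 ?_⟩
    rw [← hκα, ← hN' α]
  rcases hsign with hpos | hneg
  · exact ⟨N, κ, hframe, hnormal hγ'' hpos⟩
  · exact ⟨-N, -κ, hframe.neg, hnormal (fun α => by simp [hγ'']) fun α hα => by simp [hneg hα]⟩

lemma exists_isMovingFrame_of_lt_radius {γ : ℝ → Plane} (hγ : ContDiff ℝ 4 γ)
    (hunit : ∀ α, ‖deriv γ α‖ = 1) {s : Set ℝ} (hs : IsPreconnected s)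
    (hcurv : ∀ α ∈ s, deriv (deriv γ) α ≠ 0) {r : ℝ}
    (hr : ∀ α ∈ s, r < ‖deriv (deriv γ) α‖⁻¹) :
    ∃ N κ, IsMovingFrame γ N κ ∧ (∀ α ∈ s, |κ α| * r < 1) ∧
      EqOn N (fun α => ‖deriv (deriv γ) α‖⁻¹ • deriv (deriv γ) α) s := by
  obtain ⟨N, κ, hframe, hNκ⟩ := exists_isMovingFrame_of_ne_zero hγ hunit hs hcurv
  refine ⟨N, κ, hframe, fun α hα => ?_, fun α hα => (hNκ α hα).2⟩
  rw [(hNκ α hα).1, abs_norm, ← lt_inv_mul_iff₀ (norm_pos_iff.2 (hcurv α hα)), mul_one]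
  exact hr α hα

section NormRestrict

variable {X Y : Type*} [MeasureSpace X] [MeasureSpace Y]

lemma isProbabilityMeasure_normRestrict {s : Set X} (hs₀ : volume s ≠ 0) (hs : volume s ≠ ⊤) :
    IsProbabilityMeasure (normRestrict s) :=
  ProbabilityTheory.cond_isProbabilityMeasure_of_finite hs₀ hs

lemma ae_normRestrict_mem {s : Set X} (hs : MeasurableSet s) : ∀ᵐ x ∂normRestrict s, x ∈ s :=
  ProbabilityTheory.ae_cond_mem hs

lemma normRestrict_eq_map {f : X → Y} (hf : Measurable f) {s : Set X} {t : Set Y}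
    (h : (volume.restrict s).map f = volume.restrict t) :
    normRestrict t = (normRestrict s).map f := by
  have hvolume : volume t = volume s := by
    rw [← Measure.restrict_apply_univ t, ← h, Measure.map_apply hf .univ, preimage_univ,
      Measure.restrict_apply_univ]
  rw [normRestrict, normRestrict, Measure.map_smul, h, hvolume]

lemma normRestrict_reflected_rectangle (δ σ ε : ℝ) :
    normRestrict (Ioo (δ - ε) (δ + ε) ×ˢ Ioo (-σ) σ) =
      (normRestrict (Ioo (-ε) ε ×ˢ Ioo (-σ) σ)).map fun p : ℝ × ℝ => (δ - p.1, p.2) := by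
  have hpreserving : MeasurePreserving (fun p : ℝ × ℝ => (δ - p.1, p.2)) :=
    (Measure.measurePreserving_sub_left volume δ).prod (MeasurePreserving.id volume)
  have hrestrict := hpreserving.restrict_preimage
    (measurableSet_Ioo.prod measurableSet_Ioo : MeasurableSet (Ioo (δ - ε) (δ + ε) ×ˢ Ioo (-σ) σ))
  have hpreimage : (fun p : ℝ × ℝ => (δ - p.1, p.2)) ⁻¹' (Ioo (δ - ε) (δ + ε) ×ˢ Ioo (-σ) σ) =
      Ioo (-ε) ε ×ˢ Ioo (-σ) σ := by
    change ((δ - ·) ⁻¹' Ioo (δ - ε) (δ + ε)) ×ˢ Ioo (-σ) σ = _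
    simp
  rw [hpreimage] at hrestrict
  exact normRestrict_eq_map hpreserving.measurable hrestrict.map_eq

lemma isProbabilityMeasure_normRestrict_rectangle {σ ε : ℝ} (hσ : 0 < σ) (hε : 0 < ε) :
    IsProbabilityMeasure (normRestrict (Ioo (-ε) ε ×ˢ Ioo (-σ) σ)) := by
  have hopen : IsOpen (Ioo (-ε) ε ×ˢ Ioo (-σ) σ) := isOpen_Ioo.prod isOpen_Ioo
  refine isProbabilityMeasure_normRestrict (hopen.measure_pos volume ?_).ne' ?_
  · exact ⟨0, ⟨neg_lt_zero.2 hε, hε⟩, ⟨neg_lt_zero.2 hσ, hσ⟩⟩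
  · exact ((Metric.isBounded_Ioo _ _).prod (Metric.isBounded_Ioo _ _)).measure_lt_top.ne

end NormRestrict

section FermiChart

/-- The Fermi chart of the curve `γ` with normal field `N`. -/
noncomputable def fermiChart (γ N : ℝ → Plane) (p : ℝ × ℝ) : Plane := γ p.1 + p.2 • N p.1

/-- The area-preserving variant of the Fermi chart, obtained by undoing the shear on each fibre
`(-σ, σ)`. -/
noncomputable def fermiParam (γ N : ℝ → Plane) (κ : ℝ → ℝ) (σ : ℝ) (p : ℝ × ℝ) : Plane :=
  fermiChart γ N (p.1, unshear σ (κ p.1) p.2)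

/-- The test measure `μ_{γ(t)}^{σ,ε}`. -/
noncomputable def testMeasure (γ N : ℝ → Plane) (t σ ε : ℝ) : Measure Plane :=
  normRestrict (fermiChart γ N '' (Ioo (t - ε) (t + ε) ×ˢ Ioo (-σ) σ))

/-- The Cartesian coordinates of the plane, used to apply the area formula of `ℝ × ℝ` to maps into
the plane. -/
noncomputable def planeCoord : Plane ≃L[ℝ] ℝ × ℝ :=
  (EuclideanSpace.equiv (Fin 2) ℝ).trans (ContinuousLinearEquiv.finTwoArrow ℝ ℝ)

lemma planeCoord_apply (v : Plane) : planeCoord v = (v 0, v 1) := rfl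

lemma measurePreserving_planeCoord : MeasurePreserving planeCoord volume volume :=
  (volume_preserving_finTwoArrow ℝ).comp
    (EuclideanSpace.volume_preserving_symm_measurableEquiv_toLp (Fin 2))

lemma abs_det_eq_one_of_orthonormal {v w : Plane} (hv : ‖v‖ = 1) (hw : ‖w‖ = 1)
    (hvw : ⟪v, w⟫ = 0) : |v 0 * w 1 - w 0 * v 1| = 1 := by
  have hv' := EuclideanSpace.real_norm_sq_eq v
  have hw' := EuclideanSpace.real_norm_sq_eq w
  simp only [hv, hw, Fin.sum_univ_two, PiLp.inner_apply, RCLike.inner_apply, conj_trivial]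
    at hv' hw' hvw
  rw [← pow_eq_one_iff_of_nonneg (abs_nonneg _) two_ne_zero, sq_abs]
  linear_combination -hw' - (w 0 ^ 2 + w 1 ^ 2) * hv' - (v 0 * w 0 + v 1 * w 1) * hvw

variable {γ N : ℝ → Plane} {κ : ℝ → ℝ}

namespace IsMovingFrame

lemma continuous_fermiChart (h : IsMovingFrame γ N κ) : Continuous (fermiChart γ N) := by
  have := h.contDiff_curve.continuous
  have := h.contDiff_normal.continuous
  unfold fermiChart
  fun_prop

lemma exists_hasFDerivAt_fermiChart (h : IsMovingFrame γ N κ) (p : ℝ × ℝ) :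
    ∃ L : ℝ × ℝ →L[ℝ] Plane, HasFDerivAt (fermiChart γ N) L p ∧
      |((planeCoord : Plane →L[ℝ] ℝ × ℝ).comp L).det| = |1 - κ p.1 * p.2| := by
  have hfst := hasFDerivAt_fst (𝕜 := ℝ) (E := ℝ) (F := ℝ) (p := p)
  have hsnd := hasFDerivAt_snd (𝕜 := ℝ) (E := ℝ) (F := ℝ) (p := p)
  have hcurve := (h.hasDerivAt_curve p.1).hasFDerivAt.comp p hfst
  have hnormal := (h.hasDerivAt_normal p.1).hasFDerivAt.comp p hfst
  refine ⟨_, hcurve.add (hsnd.smul hnormal), ?_⟩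
  have hframe : |deriv γ p.1 0 * N p.1 1 - N p.1 0 * deriv γ p.1 1| = 1 :=
    abs_det_eq_one_of_orthonormal (h.norm_deriv_curve p.1) (h.norm_normal p.1)
      ((real_inner_comm _ _).trans (h.inner_normal_deriv p.1))
  calc _ = |(1 - κ p.1 * p.2) * (deriv γ p.1 0 * N p.1 1 - N p.1 0 * deriv γ p.1 1)| := by
        rw [det_real_prod]
        congr 1
        simp only [neg_smul, ContinuousLinearMap.comp_add, ContinuousLinearMap.comp_smulₛₗ,
          Real.ringHom_apply, add_apply, ContinuousLinearMap.comp_apply,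
          ContinuousLinearMap.coe_fst', ContinuousLinearMap.toSpanSingleton_apply, one_smul,
          ContinuousLinearEquiv.coe_coe, planeCoord_apply, Fin.isValue, smul_apply, smul_neg,
          PiLp.neg_apply, PiLp.smul_apply, smul_eq_mul, Prod.smul_mk, mul_neg,
          ContinuousLinearMap.smulRight_apply, ContinuousLinearMap.coe_snd', zero_smul,
          PiLp.zero_apply, Prod.mk_add_mk, add_zero, neg_zero, mul_zero, zero_add]
        ring
    _ = |1 - κ p.1 * p.2| := by rw [abs_mul, hframe, mul_one]

lemma map_fermiChart_withDensity (h : IsMovingFrame γ N κ) {s : Set (ℝ × ℝ)}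
    (hs : MeasurableSet s) (hinj : InjOn (fermiChart γ N) s) :
    ((volume.restrict s).withDensity fun p => ENNReal.ofReal |1 - κ p.1 * p.2|).map
      (fermiChart γ N) = volume.restrict (fermiChart γ N '' s) := by
  choose L hL hdet using h.exists_hasFDerivAt_fermiChart
  simpa only [hdet] using map_withDensity_abs_det_fderiv_comp measurePreserving_planeCoord hs
    h.continuous_fermiChart.measurable (fun p _ => (hL p).hasFDerivWithinAt) hinj

lemma measurable_fermiParam (h : IsMovingFrame γ N κ) {σ : ℝ} :
    Measurable (fermiParam γ N κ σ) :=
  h.continuous_fermiChart.measurable.comp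
    (measurable_fst.prodMk (measurable_unshear h.contDiff_curvature.continuous.measurable))

lemma map_fermiParam_restrict (h : IsMovingFrame γ N κ) {s : Set ℝ} (hs : MeasurableSet s) {σ : ℝ}
    (hsσ : ∀ α ∈ s, |κ α| * σ < 1) (hinj : InjOn (fermiChart γ N) (s ×ˢ Ioo (-σ) σ)) :
    (volume.restrict (s ×ˢ Ioo (-σ) σ)).map (fermiParam γ N κ σ) =
      volume.restrict (fermiChart γ N '' (s ×ˢ Ioo (-σ) σ)) := by
  have hrect : MeasurableSet (s ×ˢ Ioo (-σ) σ) := hs.prod measurableSet_Ioo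
  have hκ : Differentiable ℝ κ := h.contDiff_curvature.differentiable two_ne_zero
  rw [← h.map_fermiChart_withDensity hrect hinj]
  conv_lhs => rw [← map_shear_withDensity hκ hs hsσ]
  rw [Measure.map_map h.measurable_fermiParam (measurable_shear hκ.continuous.measurable)]
  refine Measure.map_congr ((withDensity_absolutelyContinuous _ _).ae_le ?_)
  filter_upwards [ae_restrict_mem hrect] with p hp
  simp only [Function.comp_apply, fermiParam, unshear_shear hp.2 (hsσ _ hp.1)]

lemma testMeasure_eq_map (h : IsMovingFrame γ N κ) {t σ ε : ℝ}
    (hκσ : ∀ α ∈ Ioo (t - ε) (t + ε), |κ α| * σ < 1)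
    (hinj : InjOn (fermiChart γ N) (Ioo (t - ε) (t + ε) ×ˢ Ioo (-σ) σ)) :
    testMeasure γ N t σ ε =
      (normRestrict (Ioo (t - ε) (t + ε) ×ˢ Ioo (-σ) σ)).map (fermiParam γ N κ σ) :=
  normRestrict_eq_map h.measurable_fermiParam (h.map_fermiParam_restrict measurableSet_Ioo hκσ hinj)

end IsMovingFrame

end FermiChart

section Reflection

/-- The point `y` of the plane has Fermi coordinates `(δ - α, β')` with `|β' - β| ≤ r`, where
`p = (α, β)`; that is, `y` is the image of `p` under the reflection `α ↦ δ - α` of the curve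
parameter, up to an error `r` in the normal coordinate. -/
def IsNearReflection (γ N : ℝ → Plane) (δ r : ℝ) (p : ℝ × ℝ) (y : Plane) : Prop :=
  ∃ β', |β' - p.2| ≤ r ∧ y = fermiChart γ N (δ - p.1, β')

variable {γ N : ℝ → Plane} {κ : ℝ → ℝ}

lemma IsNearReflection.mono {δ r r' : ℝ} {p : ℝ × ℝ} {y : Plane} (h : IsNearReflection γ N δ r p y)
    (hr : r ≤ r') : IsNearReflection γ N δ r' p y :=
  let ⟨β', hβ', hy⟩ := h
  ⟨β', hβ'.trans hr, hy⟩

lemma abs_fst_le_of_norm_le {p : ℝ × ℝ} {r : ℝ} (hp : ‖p‖ ≤ r) : |p.1| ≤ r :=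
  (norm_fst_le p).trans hp

lemma abs_snd_le_of_norm_le {p : ℝ × ℝ} {r : ℝ} (hp : ‖p‖ ≤ r) : |p.2| ≤ r :=
  (norm_snd_le p).trans hp

lemma sub_mem_Icc_of_abs_le {δ₀ δ α : ℝ} (hδ : δ ∈ Ioc 0 δ₀) (hα : |α| ≤ δ / 4) :
    δ - α ∈ Icc (-δ₀) (2 * δ₀) := by
  have := abs_le.1 hα
  constructor <;> linarith [hδ.1, hδ.2]

lemma mem_Icc_of_abs_le {δ₀ δ α : ℝ} (hδ : δ ∈ Ioc 0 δ₀) (hα : |α| ≤ δ / 4) :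
    α ∈ Icc (-δ₀) (2 * δ₀) := by
  have := abs_le.1 hα
  constructor <;> linarith [hδ.1, hδ.2]

lemma fermiChart_sub_fermiChart_sub_smul (α α' β β' s k : ℝ) (v : Plane) :
    fermiChart γ N (α', β') - fermiChart γ N (α, β) - (s * (1 - β * k)) • v =
      (γ α' - γ α - s • v) + β • (N α' - N α - s • (-k • v)) + (β' - β) • N α' := by
  rw [fermiChart, fermiChart]
  module

namespace IsMovingFrame

lemma exists_norm_sub_smul_le (h : IsMovingFrame γ N κ) (δ₀ M : ℝ) :
    ∃ B, ∀ δ ∈ Ioc 0 δ₀, ∀ p : ℝ × ℝ, ‖p‖ ≤ δ / 4 →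
      ∀ y, IsNearReflection γ N δ (M * δ ^ 3) p y →
        ‖y - fermiChart γ N p - ((δ - 2 * p.1) * (1 - p.2 * κ (δ / 2))) • deriv γ (δ / 2)‖ ≤
          B * δ ^ 3 := by
  obtain ⟨C₁, hC₁, hcurve⟩ := exists_norm_central_difference_le h.contDiff_curve (-δ₀) (2 * δ₀)
  obtain ⟨C₂, hC₂, hnormal⟩ := exists_norm_central_difference_le h.contDiff_normal (-δ₀) (2 * δ₀)
  refine ⟨C₁ + δ₀ * C₂ + M, ?_⟩
  rintro δ hδ ⟨α, β⟩ hp _ ⟨β', hβ', rfl⟩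
  have hδ_pos : 0 < δ := hδ.1
  have hα := abs_le.1 (abs_fst_le_of_norm_le hp)
  have hβ : |β| ≤ δ₀ := (abs_snd_le_of_norm_le hp).trans (by linarith [hδ.2])
  have hleft := mem_Icc_of_abs_le hδ (abs_fst_le_of_norm_le hp)
  have hright := sub_mem_Icc_of_abs_le hδ (abs_fst_le_of_norm_le hp)
  dsimp only at hα hleft hright hβ' ⊢
  obtain ⟨τ, hτ⟩ : ∃ τ, τ = δ / 2 - α := ⟨_, rfl⟩
  have hsub : δ / 2 - τ = α := by rw [hτ]; ring
  have hadd : δ / 2 + τ = δ - α := by rw [hτ]; ring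
  have hτ₀ : 0 ≤ τ := by linarith
  have hτδ : τ ^ 3 ≤ δ ^ 3 := by gcongr; linarith
  have hcurve' := hcurve (δ / 2) τ hτ₀ (hsub ▸ hleft.1) (hadd ▸ hright.2)
  have hnormal' := hnormal (δ / 2) τ hτ₀ (hsub ▸ hleft.1) (hadd ▸ hright.2)
  rw [(h.hasDerivAt_normal _).deriv, hsub, hadd] at hnormal'
  rw [hsub, hadd] at hcurve'
  rw [show δ - 2 * α = 2 * τ by rw [hτ]; ring, fermiChart_sub_fermiChart_sub_smul]
  calc _ ≤ _ := norm_add₃_le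
    _ ≤ C₁ * τ ^ 3 + δ₀ * (C₂ * τ ^ 3) + M * δ ^ 3 := by
        rw [norm_smul, norm_smul, h.norm_normal, mul_one, Real.norm_eq_abs, Real.norm_eq_abs]
        gcongr
        exact (abs_nonneg β).trans hβ
    _ ≤ C₁ * δ ^ 3 + δ₀ * (C₂ * δ ^ 3) + M * δ ^ 3 := by
        have hδ₀ : 0 ≤ δ₀ := (abs_nonneg β).trans hβ
        gcongr
    _ = (C₁ + δ₀ * C₂ + M) * δ ^ 3 := by ring

lemma exists_norm_le_inner_add (h : IsMovingFrame γ N κ) {δ₀ : ℝ}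
    (hκ : ∀ α ∈ Icc (-δ₀) (2 * δ₀), |κ α| * δ₀ < 1) (M : ℝ) :
    ∃ K, ∀ δ ∈ Ioc 0 δ₀, ∀ p : ℝ × ℝ, ‖p‖ ≤ δ / 4 →
      ∀ y, IsNearReflection γ N δ (M * δ ^ 3) p y →
        ‖y - fermiChart γ N p‖ ≤ ⟪deriv γ (δ / 2), y - fermiChart γ N p⟫ + K * δ ^ 4 := by
  obtain ⟨B, hB⟩ := h.exists_norm_sub_smul_le δ₀ M
  refine ⟨2 * B ^ 2 * δ₀, fun δ hδ p hp y hy => ?_⟩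
  obtain ⟨hδ_pos, hδ_le⟩ := hδ
  have hα := abs_le.1 (abs_fst_le_of_norm_le hp)
  have hβκ : p.2 * κ (δ / 2) ≤ 1 / 2 := by
    calc p.2 * κ (δ / 2) ≤ |p.2| * |κ (δ / 2)| := (le_abs_self _).trans_eq (abs_mul _ _)
      _ ≤ δ₀ / 2 * |κ (δ / 2)| := by
          gcongr
          linarith [abs_snd_le_of_norm_le hp]
      _ ≤ 1 / 2 := by linarith [hκ (δ / 2) ⟨by linarith, by linarith⟩]
  have hlength : δ / 4 ≤ (δ - 2 * p.1) * (1 - p.2 * κ (δ / 2)) := by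
    calc δ / 4 = δ / 2 * (1 / 2) := by ring
      _ ≤ (δ - 2 * p.1) * (1 - p.2 * κ (δ / 2)) := by gcongr <;> linarith
  refine (norm_le_inner_add_of_norm_sub_smul_le (h.norm_deriv_curve (δ / 2)) (by linarith)
    (hB δ ⟨hδ_pos, hδ_le⟩ p hp y hy)).trans ?_
  gcongr
  calc (B * δ ^ 3) ^ 2 / (2 * ((δ - 2 * p.1) * (1 - p.2 * κ (δ / 2))))
      ≤ (B * δ ^ 3) ^ 2 / (2 * (δ / 4)) := by gcongr
    _ = 2 * B ^ 2 * δ * δ ^ 4 := by field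
    _ ≤ 2 * B ^ 2 * δ₀ * δ ^ 4 := by gcongr

lemma exists_abs_inner_sub_le (h : IsMovingFrame γ N κ) (δ₀ M : ℝ) :
    ∃ L, ∀ δ ∈ Ioc 0 δ₀, ∀ p : ℝ × ℝ, ‖p‖ ≤ δ / 4 → ∀ y z,
      IsNearReflection γ N δ (M * δ ^ 3) p y → IsNearReflection γ N δ (M * δ ^ 3) p z →
        |⟪deriv γ (δ / 2), y - z⟫| ≤ L * δ ^ 4 := by
  obtain ⟨K, hK⟩ := h.contDiff_deriv_curve.contDiffOn.exists_lipschitzOnWith two_ne_zero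
    (convex_Icc (-δ₀) (2 * δ₀)) isCompact_Icc
  refine ⟨2 * M * K, ?_⟩
  rintro δ hδ ⟨α, β⟩ hp _ _ ⟨β₁, hβ₁, rfl⟩ ⟨β₂, hβ₂, rfl⟩
  have hα := abs_fst_le_of_norm_le hp
  have hright := sub_mem_Icc_of_abs_le hδ hα
  have hmid : δ / 2 ∈ Icc (-δ₀) (2 * δ₀) := ⟨by linarith [hδ.1, hδ.2], by linarith [hδ.1, hδ.2]⟩
  dsimp only at hα hright hβ₁ hβ₂ ⊢
  have hdiff : fermiChart γ N (δ - α, β₁) - fermiChart γ N (δ - α, β₂) =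
      (β₁ - β₂) • N (δ - α) := by
    rw [fermiChart, fermiChart]
    module
  have hnormal : ⟪deriv γ (δ / 2), N (δ - α)⟫ =
      ⟪deriv γ (δ / 2) - deriv γ (δ - α), N (δ - α)⟫ := by
    rw [inner_sub_left, real_inner_comm (N (δ - α)) (deriv γ (δ - α)), h.inner_normal_deriv,
      sub_zero]
  have htilt : |⟪deriv γ (δ / 2), N (δ - α)⟫| ≤ K * δ := by
    calc |⟪deriv γ (δ / 2), N (δ - α)⟫| ≤ ‖deriv γ (δ / 2) - deriv γ (δ - α)‖ := by
          rw [hnormal, ← mul_one ‖_‖, ← h.norm_normal (δ - α)]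
          exact abs_real_inner_le_norm _ _
      _ ≤ K * |δ / 2 - (δ - α)| := hK.norm_sub_le hmid hright
      _ ≤ K * δ := by
          gcongr
          rw [abs_le] at hα ⊢
          constructor <;> linarith [hδ.1]
  have hβ : |β₁ - β₂| ≤ 2 * M * δ ^ 3 := by
    linarith [abs_sub_le β₁ β β₂, abs_sub_comm β₂ β]
  calc |⟪deriv γ (δ / 2), fermiChart γ N (δ - α, β₁) - fermiChart γ N (δ - α, β₂)⟫|
      = |β₁ - β₂| * |⟪deriv γ (δ / 2), N (δ - α)⟫| := by
        rw [hdiff, real_inner_smul_right, abs_mul]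
    _ ≤ 2 * M * δ ^ 3 * (K * δ) := by
        gcongr
        exact (abs_nonneg _).trans hβ
    _ = 2 * M * K * δ ^ 4 := by ring

lemma exists_isNearReflection_fermiParam (h : IsMovingFrame γ N κ) {δ₀ : ℝ}
    (hκ : ∀ α ∈ Icc (-δ₀) (2 * δ₀), |κ α| * δ₀ < 1) :
    ∃ M, ∀ δ ∈ Ioc 0 δ₀, ∀ σ ≤ δ / 4, ∀ p : ℝ × ℝ, |p.1| ≤ δ / 4 → p.2 ∈ Ioo (-σ) σ →
      IsNearReflection γ N δ (M * δ ^ 3) (p.1, unshear σ (κ p.1) p.2)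
        (fermiParam γ N κ σ (δ - p.1, p.2)) := by
  obtain ⟨K, hK⟩ := h.contDiff_curvature.contDiffOn.exists_lipschitzOnWith two_ne_zero
    (convex_Icc (-δ₀) (2 * δ₀)) isCompact_Icc
  refine ⟨K, ?_⟩
  rintro δ hδ σ hσδ ⟨α, u⟩ hα hu
  have hδ_pos : 0 < δ := hδ.1
  have hσ : 0 < σ := neg_lt_self_iff.1 (hu.1.trans hu.2)
  have hleft := mem_Icc_of_abs_le hδ hα
  have hright := sub_mem_Icc_of_abs_le hδ hα
  have hκσ : ∀ α ∈ Icc (-δ₀) (2 * δ₀), |κ α| * σ ≤ 1 / 2 := fun α hα => by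
    calc |κ α| * σ ≤ |κ α| * (δ₀ / 2) := by gcongr; linarith [hδ.1, hδ.2]
      _ ≤ 1 / 2 := by linarith [hκ α hα]
  refine ⟨unshear σ (κ (δ - α)) u, ?_, rfl⟩
  calc |unshear σ (κ (δ - α)) u - unshear σ (κ α) u| ≤ |κ (δ - α) - κ α| * σ ^ 2 :=
        abs_unshear_sub_unshear_le hu (hκσ _ hleft) (hκσ _ hright)
    _ ≤ K * |δ - α - α| * σ ^ 2 := by gcongr; exact hK.norm_sub_le hright hleft
    _ ≤ K * (2 * δ) * (δ / 4) ^ 2 := by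
        gcongr
        rw [abs_le] at hα ⊢
        constructor <;> linarith [hδ.1]
    _ ≤ K * δ ^ 3 := by
        have : 0 ≤ K * δ ^ 3 := by positivity
        linarith

end IsMovingFrame

end Reflection

section Comparison

lemma integrable_of_ae_mem_isBounded {Ω F : Type*} [MeasurableSpace Ω] [NormedAddCommGroup F]
    {P : Measure Ω} [IsFiniteMeasure P] {f : Ω → F} (hf : AEStronglyMeasurable f P) {s : Set F}
    (hs : Bornology.IsBounded s) (h : ∀ᵐ ω ∂P, f ω ∈ s) : Integrable f P :=
  let ⟨C, hC⟩ := hs.exists_norm_le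
  .of_bound hf C (h.mono fun _ hω => hC _ hω)

variable {γ N : ℝ → Plane} {κ : ℝ → ℝ}

lemma IsNearReflection.mem_image_closedBall {δ r ρ : ℝ} {p : ℝ × ℝ} {y : Plane}
    (hy : IsNearReflection γ N δ r p y) (hp : ‖p‖ ≤ ρ) :
    y ∈ fermiChart γ N '' Metric.closedBall 0 (max |δ| r + ρ) := by
  obtain ⟨β', hβ', rfl⟩ := hy
  refine ⟨_, mem_closedBall_zero_iff.2 (max_le ?_ ?_), rfl⟩
  · exact (abs_sub δ p.1).trans (add_le_add (le_max_left _ _) (abs_fst_le_of_norm_le hp))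
  · calc |β'| = |β' - p.2 + p.2| := by rw [sub_add_cancel]
      _ ≤ |β' - p.2| + |p.2| := abs_add_le _ _
      _ ≤ max |δ| r + ρ :=
        add_le_add (hβ'.trans (le_max_right _ _)) (abs_snd_le_of_norm_le hp)

lemma isNearReflection_fermiChart_tilt {A δ σ α β : ℝ} (hσ : σ ≤ δ / 4) (hα : |α| ≤ δ / 4)
    (hβ : β ∈ Ioo (-σ) σ) :
    IsNearReflection γ N δ (|A| * δ ^ 3) (α, β)
      (fermiChart γ N (δ - α, β - 1 / 2 * A * (σ ^ 2 - β ^ 2) * (δ - 2 * α))) := by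
  have hσ_pos : 0 < σ := neg_lt_self_iff.1 (hβ.1.trans hβ.2)
  have hβσ : β ^ 2 < σ ^ 2 := sq_lt_sq' hβ.1 hβ.2
  have hheight : |σ ^ 2 - β ^ 2| ≤ δ ^ 2 := by
    rw [abs_of_nonneg (sub_nonneg.2 hβσ.le)]
    calc σ ^ 2 - β ^ 2 ≤ σ ^ 2 := sub_le_self _ (sq_nonneg β)
      _ ≤ δ ^ 2 := by gcongr; linarith
  have hwidth : |δ - 2 * α| ≤ 2 * δ := by
    rw [abs_le] at hα ⊢
    constructor <;> linarith
  refine ⟨_, ?_, rfl⟩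
  calc |β - 1 / 2 * A * (σ ^ 2 - β ^ 2) * (δ - 2 * α) - β|
      = 1 / 2 * |A| * |σ ^ 2 - β ^ 2| * |δ - 2 * α| := by
        rw [sub_sub_cancel_left, abs_neg, abs_mul, abs_mul, abs_mul, abs_of_pos one_half_pos]
    _ ≤ 1 / 2 * |A| * δ ^ 2 * (2 * δ) := by gcongr
    _ = |A| * δ ^ 3 := by ring

lemma abs_mul_lt_one_of_le {k σ δ₀ : ℝ} (hk : |k| * δ₀ < 1) (hσ : σ ≤ δ₀) : |k| * σ < 1 :=
  (mul_le_mul_of_nonneg_left hσ (abs_nonneg k)).trans_lt hk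

namespace IsMovingFrame

lemma isBounded_fermiChart_image_closedBall (h : IsMovingFrame γ N κ) (ρ : ℝ) :
    Bornology.IsBounded (fermiChart γ N '' Metric.closedBall 0 ρ) :=
  ((isCompact_closedBall _ _).image h.continuous_fermiChart).isBounded

lemma exists_abs_W1_map_sub_W1_map_le (h : IsMovingFrame γ N κ) {δ₀ : ℝ}
    (hκ : ∀ α ∈ Icc (-δ₀) (2 * δ₀), |κ α| * δ₀ < 1) (M : ℝ) :
    ∃ C, ∀ δ ∈ Ioc 0 δ₀, ∀ {Ω : Type*} [MeasurableSpace Ω] (P : Measure Ω)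
      [IsProbabilityMeasure P] {q : Ω → ℝ × ℝ} {Y Z : Ω → Plane},
      Measurable q → Measurable Y → Measurable Z →
      (∀ᵐ ω ∂P, ‖q ω‖ ≤ δ / 4) →
      (∀ᵐ ω ∂P, IsNearReflection γ N δ (M * δ ^ 3) (q ω) (Y ω)) →
      (∀ᵐ ω ∂P, IsNearReflection γ N δ (M * δ ^ 3) (q ω) (Z ω)) →
      |W1 (P.map (fermiChart γ N ∘ q)) (P.map Y) - W1 (P.map (fermiChart γ N ∘ q)) (P.map Z)| ≤
        C * δ ^ 4 := by
  obtain ⟨K, hK⟩ := h.exists_norm_le_inner_add hκ M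
  obtain ⟨L, hL⟩ := h.exists_abs_inner_sub_le δ₀ M
  refine ⟨K + L, fun δ hδ Ω _ P _ q Y Z hq hY hZ hq_le hYq hZq => ?_⟩
  have hX_int : Integrable (fermiChart γ N ∘ q) P :=
    integrable_of_ae_mem_isBounded
      (h.continuous_fermiChart.measurable.comp hq).aestronglyMeasurable
      (h.isBounded_fermiChart_image_closedBall (δ / 4))
      (hq_le.mono fun ω hω => mem_image_of_mem _ (mem_closedBall_zero_iff.2 hω))
  have hint {W : Ω → Plane} (hW : Measurable W)
      (hWq : ∀ᵐ ω ∂P, IsNearReflection γ N δ (M * δ ^ 3) (q ω) (W ω)) : Integrable W P :=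
    integrable_of_ae_mem_isBounded hW.aestronglyMeasurable
      (h.isBounded_fermiChart_image_closedBall _)
      (hWq.mp (hq_le.mono fun ω hω hWω => hWω.mem_image_closedBall hω))
  rw [add_mul]
  refine abs_W1_map_sub_W1_map_le hX_int (hint hY hYq) (hint hZ hZq)
    (h.norm_deriv_curve (δ / 2)).le ?_ ?_ ?_
  · filter_upwards [hq_le, hYq] with ω hω hYω using hK δ hδ _ hω _ hYω
  · filter_upwards [hq_le, hZq] with ω hω hZω using hK δ hδ _ hω _ hZω
  · filter_upwards [hq_le, hYq, hZq] with ω hω hYω hZω using hL δ hδ _ hω _ _ hYω hZω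

lemma testMeasure_eq_map_of_le (h : IsMovingFrame γ N κ) {δ₀ : ℝ}
    (hκ : ∀ α ∈ Icc (-δ₀) (2 * δ₀), |κ α| * δ₀ < 1)
    (hinj : InjOn (fermiChart γ N) (Icc (-δ₀) (2 * δ₀) ×ˢ Icc (-δ₀) δ₀)) {t σ ε : ℝ}
    (ht : t ∈ Icc 0 δ₀) (hσ : σ ≤ δ₀) (hε : ε ≤ δ₀) :
    testMeasure γ N t σ ε =
      (normRestrict (Ioo (t - ε) (t + ε) ×ˢ Ioo (-σ) σ)).map (fermiParam γ N κ σ) := by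
  have hsubset : Ioo (t - ε) (t + ε) ⊆ Icc (-δ₀) (2 * δ₀) :=
    Ioo_subset_Icc_self.trans (Icc_subset_Icc (by linarith [ht.1]) (by linarith [ht.2]))
  refine h.testMeasure_eq_map (fun α hα => abs_mul_lt_one_of_le (hκ α (hsubset hα)) hσ)
    (hinj.mono (prod_mono hsubset ?_))
  exact Ioo_subset_Icc_self.trans (Icc_subset_Icc (neg_le_neg hσ) hσ)

lemma testMeasure_zero_eq_map (h : IsMovingFrame γ N κ) {δ₀ : ℝ} (hδ₀ : 0 ≤ δ₀)
    (hκ : ∀ α ∈ Icc (-δ₀) (2 * δ₀), |κ α| * δ₀ < 1)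
    (hinj : InjOn (fermiChart γ N) (Icc (-δ₀) (2 * δ₀) ×ˢ Icc (-δ₀) δ₀)) {σ ε : ℝ}
    (hσ : σ ≤ δ₀) (hε : ε ≤ δ₀) :
    testMeasure γ N 0 σ ε =
      (normRestrict (Ioo (-ε) ε ×ˢ Ioo (-σ) σ)).map (fermiParam γ N κ σ) := by
  rw [h.testMeasure_eq_map_of_le hκ hinj ⟨le_rfl, hδ₀⟩ hσ hε, zero_sub, zero_add]

lemma testMeasure_eq_map_reflected (h : IsMovingFrame γ N κ) {δ₀ : ℝ}
    (hκ : ∀ α ∈ Icc (-δ₀) (2 * δ₀), |κ α| * δ₀ < 1)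
    (hinj : InjOn (fermiChart γ N) (Icc (-δ₀) (2 * δ₀) ×ˢ Icc (-δ₀) δ₀)) {δ σ ε : ℝ}
    (hδ : δ ∈ Icc 0 δ₀) (hσ : σ ≤ δ₀) (hε : ε ≤ δ₀) :
    testMeasure γ N δ σ ε = (normRestrict (Ioo (-ε) ε ×ˢ Ioo (-σ) σ)).map
      fun p => fermiParam γ N κ σ (δ - p.1, p.2) := by
  rw [h.testMeasure_eq_map_of_le hκ hinj hδ hσ hε, normRestrict_reflected_rectangle,
    Measure.map_map h.measurable_fermiParam (by fun_prop)]
  rfl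

end IsMovingFrame

end Comparison

theorem planar_curve_approximate_transport_general {γ N : ℝ → Plane} {κ : ℝ → ℝ}
    (h : IsMovingFrame γ N κ) {δ₀ : ℝ}
    (hκ : ∀ α ∈ Icc (-δ₀) (2 * δ₀), |κ α| * δ₀ < 1)
    (hinj : InjOn (fermiChart γ N) (Icc (-δ₀) (2 * δ₀) ×ˢ Icc (-δ₀) δ₀)) (M : ℝ) :
    ∃ C > 0, ∀ δ ∈ Ioc 0 δ₀, ∀ σ ε, 0 < σ → 0 < ε → max σ ε ≤ δ / 4 →
      ∀ T : Plane → Plane, Measurable T →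
        (∀ p ∈ Ioo (-ε) ε ×ˢ Ioo (-σ) σ,
          IsNearReflection γ N δ (M * δ ^ 3) p (T (fermiChart γ N p))) →
        |W1 (testMeasure γ N 0 σ ε) (testMeasure γ N δ σ ε) -
          W1 (testMeasure γ N 0 σ ε) ((testMeasure γ N 0 σ ε).map T)| ≤ C * δ ^ 4 := by
  obtain ⟨M', hM'⟩ := h.exists_isNearReflection_fermiParam hκ
  obtain ⟨C, hC⟩ := h.exists_abs_W1_map_sub_W1_map_le hκ (max M M')
  refine ⟨max C 1, by positivity, fun δ hδ σ ε hσ hε hσε T hT hTrefl => ?_⟩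
  have hδ_pos : 0 < δ := hδ.1
  obtain ⟨hσδ, hεδ⟩ := max_le_iff.1 hσε
  have hσδ₀ : σ ≤ δ₀ := by linarith [hδ.2]
  have hεδ₀ : ε ≤ δ₀ := by linarith [hδ.2]
  let P := normRestrict (Ioo (-ε) ε ×ˢ Ioo (-σ) σ)
  have : IsProbabilityMeasure P := isProbabilityMeasure_normRestrict_rectangle hσ hε
  let q : ℝ × ℝ → ℝ × ℝ := fun p => (p.1, unshear σ (κ p.1) p.2)
  have hq : Measurable q :=
    measurable_fst.prodMk (measurable_unshear h.contDiff_curvature.continuous.measurable)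
  have hY : Measurable fun p : ℝ × ℝ => fermiParam γ N κ σ (δ - p.1, p.2) :=
    h.measurable_fermiParam.comp (by fun_prop)
  have hP : ∀ᵐ p ∂P, p ∈ Ioo (-ε) ε ×ˢ Ioo (-σ) σ :=
    ae_normRestrict_mem (measurableSet_Ioo.prod measurableSet_Ioo)
  have hqP : ∀ᵐ p ∂P, q p ∈ Ioo (-ε) ε ×ˢ Ioo (-σ) σ := hP.mono fun p hp =>
    ⟨hp.1, unshear_mem_Ioo hp.2 <| abs_mul_lt_one_of_le
      (hκ _ (mem_Icc_of_abs_le hδ ((abs_lt.2 hp.1).le.trans hεδ))) hσδ₀⟩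
  rw [h.testMeasure_eq_map_reflected hκ hinj (Ioc_subset_Icc_self hδ) hσδ₀ hεδ₀,
    h.testMeasure_zero_eq_map (hδ_pos.le.trans hδ.2) hκ hinj hσδ₀ hεδ₀,
    Measure.map_map hT h.measurable_fermiParam]
  refine (hC δ hδ P hq hY (hT.comp h.measurable_fermiParam) ?_ ?_ ?_).trans
    (by gcongr; exact le_max_left C 1)
  · exact hqP.mono fun p hp =>
      max_le ((abs_lt.2 hp.1).le.trans hεδ) ((abs_lt.2 hp.2).le.trans hσδ)
  · exact hP.mono fun p hp => (hM' δ hδ σ hσδ p ((abs_lt.2 hp.1).le.trans hεδ) hp.2).mono <| by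
      gcongr
      exact le_max_right M M'
  · exact hqP.mono fun p hp => (hTrefl _ hp).mono (by gcongr; exact le_max_left M M')

/-- For the planar curve, the proposed transport map
`T(φ(α,β)) = φ(δ−α, β − ½(Ṙ/R²)(σ²−β²)(δ−2α))` satisfies
`W₁(μ_{x₀}, μ_y) = W₁(μ_{x₀}, T_* μ_{x₀}) + O(δ⁴)`. -/
theorem planar_curve_approximate_transport
    (δ₀ : ℝ) (hδ₀ : 0 < δ₀)
    (γ : ℝ → EuclideanSpace ℝ (Fin 2)) (hγ : ContDiff ℝ (⊤ : ℕ∞) γ)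
    (hunit : ∀ α : ℝ, ‖deriv γ α‖ = 1)
    (hcurv : ∀ α ∈ Icc (-δ₀) (2 * δ₀), deriv (deriv γ) α ≠ 0)
    (R : ℝ → ℝ) (hR : ∀ α : ℝ, R α = ‖deriv (deriv γ) α‖⁻¹)
    (n : ℝ → EuclideanSpace ℝ (Fin 2)) (hn : ∀ α : ℝ, n α = R α • deriv (deriv γ) α)
    (φ : ℝ × ℝ → EuclideanSpace ℝ (Fin 2)) (hφ : ∀ p : ℝ × ℝ, φ p = γ p.1 + p.2 • n p.1)
    (hinj : InjOn φ (Icc (-δ₀) (2 * δ₀) ×ˢ Icc (-δ₀) δ₀))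
    (hreach : ∀ α ∈ Icc (-δ₀) (2 * δ₀), δ₀ < R α)
    (μ : ℝ → ℝ → ℝ → Measure (EuclideanSpace ℝ (Fin 2)))
    (hμ : ∀ t σ ε : ℝ, μ t σ ε = normRestrict (φ '' (Ioo (t - ε) (t + ε) ×ˢ Ioo (-σ) σ)))
    (T : ℝ → ℝ → ℝ → EuclideanSpace ℝ (Fin 2) → EuclideanSpace ℝ (Fin 2))
    (hTmeas : ∀ δ σ ε : ℝ, Measurable (T δ σ ε))
    (hT : ∀ δ ∈ Ioc (0:ℝ) δ₀, ∀ σ ε : ℝ, 0 < σ → 0 < ε → max σ ε ≤ δ / 4 →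
      ∀ α ∈ Ioo (-ε) ε, ∀ β ∈ Ioo (-σ) σ,
        T δ σ ε (φ (α, β)) =
          φ (δ - α, β - 1 / 2 * (deriv R 0 / R 0 ^ 2) * (σ ^ 2 - β ^ 2) * (δ - 2 * α))) :
    ∃ C > (0:ℝ), ∃ δ₁ ∈ Ioc (0:ℝ) δ₀, ∀ δ ∈ Ioc (0:ℝ) δ₁, ∀ σ ε : ℝ,
      0 < σ → 0 < ε → max σ ε ≤ δ / 4 →
      |W1 (μ 0 σ ε) (μ δ σ ε) -
        W1 (μ 0 σ ε) ((μ 0 σ ε).map (T δ σ ε))| ≤ C * δ ^ 4 := by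
  obtain ⟨N, κ, h, hκ, hN⟩ := exists_isMovingFrame_of_lt_radius
    (hγ.of_le (WithTop.coe_le_coe.2 le_top)) hunit isPreconnected_Icc hcurv
    (fun α hα => hR α ▸ hreach α hα)
  have hφN : EqOn (fermiChart γ N) φ (Icc (-δ₀) (2 * δ₀) ×ˢ univ) := fun p hp => by
    rw [hφ, hn, hR, fermiChart, hN hp.1]
  obtain ⟨C, hC_pos, hC⟩ := planar_curve_approximate_transport_general h hκ
    (hinj.congr (hφN.mono (prod_mono_right (subset_univ _))).symm) |deriv R 0 / R 0 ^ 2|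
  refine ⟨C, hC_pos, δ₀, ⟨hδ₀, le_rfl⟩, fun δ hδ σ ε hσ hε hσε => ?_⟩
  obtain ⟨hσδ, hεδ⟩ := max_le_iff.1 hσε
  have hμ_eq : ∀ t ∈ Icc 0 δ, μ t σ ε = testMeasure γ N t σ ε := fun t ht => by
    rw [hμ, testMeasure, (hφN.mono (prod_mono (Ioo_subset_Icc_self.trans (Icc_subset_Icc
      (by linarith [ht.1, hδ.2]) (by linarith [ht.2, hδ.2]))) (subset_univ _))).image_eq]
  rw [hμ_eq 0 ⟨le_rfl, hδ.1.le⟩, hμ_eq δ ⟨hδ.1.le, le_rfl⟩]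
  refine hC δ hδ σ ε hσ hε hσε (T δ σ ε) (hTmeas δ σ ε) fun ⟨α, β⟩ ⟨hα, hβ⟩ => ?_
  have hα' : |α| ≤ δ / 4 := (abs_lt.2 hα).le.trans hεδ
  rw [hφN ⟨mem_Icc_of_abs_le hδ hα', mem_univ _⟩, hT δ hδ σ ε hσ hε hσε α hα β hβ,
    ← hφN ⟨sub_mem_Icc_of_abs_le hδ hα', mem_univ _⟩]
  exact isNearReflection_fermiChart_tilt hσδ hα' hβ
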